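/- (Lower bound for the reaction terms of the pinching quantity f, flat-ambient case.) Let k̃ ≥ 1 and m ≥ 4k̃ be integers, let c be a real number with 1/m < c ≤ 1/(m−k̃), let d ∈ ℝ and set f = c|H|² + d − |A|². Then cR₂ − R₁ ≥ (2/(mc−1)) f |A⁻|² + (mc/(mc−1)) f |h̊|² + (1/(mc−1)) f² − (1/(mc−1)) d (|A⁻|² + 2f) − (mc/(mc−1)) d |h̊|². -/

import Mathlib

/-!
Write `a = |h̊|²`, `b = |A⁻|²`, `e = mc − 1` and `g = f − d`, so that
`|H|²/m = (g + a + b)/e`.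

For symmetric `A`, `B`, diagonalizing `A` gives
`tr(AB)² + ‖AB − BA‖² ≤ 2‖A‖²‖B‖²` (`trace_sq_add_comm_le`). Since `A_α` is traceless for
`α ≥ 1`, replacing `A_0` by `h̊` changes neither `tr(A_0 A_α)` nor `[A_0, A_α]`. Applying the
inequality to every pair other than `(0, 0)` yields `R₁ ≤ (a + |H|²/m)² + 4ab + 2b²`
(`reactionR1_le`).

After substituting for `|H|²`, the claim reduces to
`(1/e − 3) ab + (1/e)(b² − bd + d²) − 2b² ≥ 0`. The bounds `c ≤ 1/(m − k̃)` and `m ≥ 4k̃` force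
`1/e ≥ 3`, and `b² − bd + d² ≥ (3/4) b²`, so the left side is at least `b²/4`. This slack makes
the constant `2` sufficient, in place of the sharp constant `3/2` of Li and Li.
-/

open Finset

/-- Squared Frobenius norm of a real matrix. -/
def frobSq {m : ℕ} (M : Matrix (Fin m) (Fin m) ℝ) : ℝ := ∑ i, ∑ j, (M i j) ^ 2

/-- The reaction term `R₁ = Σ_{α,β} (tr(A_α A_β))² + Σ_{α,β} ‖A_α A_β − A_β A_α‖²`. -/
def reactionR1 {m k : ℕ} (A : Fin k → Matrix (Fin m) (Fin m) ℝ) : ℝ :=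
  (∑ α, ∑ β, (Matrix.trace (A α * A β)) ^ 2)
    + ∑ α, ∑ β, frobSq (A α * A β - A β * A α)

/-- The traceless part `h̊ = A_0 − (|H|/m)·Id` of the second fundamental form in the
principal direction. -/
noncomputable def tracelessh {m k : ℕ} (hk : 0 < k)
    (A : Fin k → Matrix (Fin m) (Fin m) ℝ) (H : ℝ) : Matrix (Fin m) (Fin m) ℝ :=
  A ⟨0, hk⟩ - (H / (m : ℝ)) • (1 : Matrix (Fin m) (Fin m) ℝ)

/-- `|A⁻|² = Σ_{α ≥ 1} ‖A_α‖²`. -/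
def AminusSq {m k : ℕ} (hk : 0 < k) (A : Fin k → Matrix (Fin m) (Fin m) ℝ) : ℝ :=
  ∑ α ∈ Finset.univ.erase ⟨0, hk⟩, frobSq (A α)

open Matrix in
lemma frobSq_eq_trace {m : ℕ} (M : Matrix (Fin m) (Fin m) ℝ) : frobSq M = (M * Mᵀ).trace := by
  simp [frobSq, Matrix.trace, Matrix.mul_apply, sq]

lemma frobSq_nonneg {m : ℕ} (M : Matrix (Fin m) (Fin m) ℝ) : 0 ≤ frobSq M :=
  Finset.sum_nonneg fun _ _ => Finset.sum_nonneg fun _ _ => sq_nonneg _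

lemma trace_conj {m : ℕ} (U V M : Matrix (Fin m) (Fin m) ℝ) (h : V * U = 1) :
    (U * M * V).trace = M.trace := by
  rw [Matrix.trace_mul_comm, ← Matrix.mul_assoc, h, Matrix.one_mul]

open Matrix in
lemma frobSq_conj {m : ℕ} (U M : Matrix (Fin m) (Fin m) ℝ) (h : Uᵀ * U = 1) :
    frobSq (U * M * Uᵀ) = frobSq M := by
  rw [frobSq_eq_trace, frobSq_eq_trace, ← trace_conj U Uᵀ (M * Mᵀ) h]
  congr 1
  simp only [Matrix.transpose_mul, Matrix.transpose_transpose]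
  calc U * M * Uᵀ * (U * (Mᵀ * Uᵀ)) = U * M * (Uᵀ * U) * (Mᵀ * Uᵀ) := by
        simp only [Matrix.mul_assoc]
    _ = _ := by rw [h]; simp only [Matrix.mul_one, Matrix.mul_assoc]

lemma frobSq_diagonal {m : ℕ} (l : Fin m → ℝ) :
    frobSq (Matrix.diagonal l) = ∑ i, l i ^ 2 := by
  simp [frobSq, Matrix.diagonal_apply, ite_pow]

/-- The diagonal case: the trace sees only the diagonal entries of `B` and the commutator only
the off-diagonal ones, where `(l i - l j)² ≤ 2 (l i² + l j²) ≤ 2 ∑ l²`. -/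
lemma diagonal_trace_sq_add_comm_le {m : ℕ} (l : Fin m → ℝ) (B : Matrix (Fin m) (Fin m) ℝ) :
    (Matrix.diagonal l * B).trace ^ 2 + frobSq (Matrix.diagonal l * B - B * Matrix.diagonal l)
      ≤ 2 * frobSq (Matrix.diagonal l) * frobSq B := by
  rw [frobSq_diagonal]
  set L := ∑ i, l i ^ 2 with hL
  have hL0 : 0 ≤ L := Finset.sum_nonneg fun _ _ => sq_nonneg _
  have h1 : (Matrix.diagonal l * B).trace ^ 2 ≤ L * ∑ i, B i i ^ 2 := by
    simp only [Matrix.trace, Matrix.diag_apply, Matrix.diagonal_mul]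
    exact Finset.sum_mul_sq_le_sq_mul_sq _ _ _
  have h2 : L * ∑ i, B i i ^ 2 = ∑ i, ∑ j, if i = j then L * B i j ^ 2 else 0 := by
    simp [Finset.mul_sum]
  refine (add_le_add_left (h1.trans_eq h2) _).trans ?_
  simp only [frobSq, Finset.mul_sum, ← Finset.sum_add_distrib]
  refine Finset.sum_le_sum fun i _ => Finset.sum_le_sum fun j _ => ?_
  simp only [Matrix.sub_apply, Matrix.diagonal_mul, Matrix.mul_diagonal]
  by_cases hij : i = j
  · subst hij
    have := mul_nonneg hL0 (sq_nonneg (B i i))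
    simp only [if_true]
    nlinarith
  · have h3 : l i ^ 2 + l j ^ 2 ≤ L := by
      rw [hL, ← Finset.sum_pair (f := fun i => l i ^ 2) hij]
      exact Finset.sum_le_sum_of_subset_of_nonneg (Finset.subset_univ _)
        fun _ _ _ => sq_nonneg _
    have h4 : (l i - l j) ^ 2 ≤ 2 * L := by nlinarith [sq_nonneg (l i + l j)]
    have h5 := mul_le_mul_of_nonneg_right h4 (sq_nonneg (B i j))
    simp only [hij, if_false]
    nlinarith

open Matrix in
/-- For symmetric `A`, `tr(AB)² + ‖AB − BA‖² ≤ 2‖A‖²‖B‖²`, by orthogonal invariance and the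
diagonal case. -/
lemma trace_sq_add_comm_le {m : ℕ} (A B : Matrix (Fin m) (Fin m) ℝ) (hA : A.IsSymm) :
    (A * B).trace ^ 2 + frobSq (A * B - B * A) ≤ 2 * frobSq A * frobSq B := by
  have hH : A.IsHermitian := by
    rw [Matrix.IsHermitian, Matrix.conjTranspose_eq_transpose_of_trivial]; exact hA
  obtain ⟨U, l, hU, hU', hD⟩ : ∃ (U : Matrix (Fin m) (Fin m) ℝ) (l : Fin m → ℝ),
      Uᵀ * U = 1 ∧ U * Uᵀ = 1 ∧ A = U * Matrix.diagonal l * Uᵀ := by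
    refine ⟨hH.eigenvectorUnitary, hH.eigenvalues, ?_, ?_, ?_⟩
    · have := Unitary.coe_star_mul_self hH.eigenvectorUnitary
      rwa [Matrix.star_eq_conjTranspose, Matrix.conjTranspose_eq_transpose_of_trivial] at this
    · have := Unitary.coe_mul_star_self hH.eigenvectorUnitary
      rwa [Unitary.coe_star, Matrix.star_eq_conjTranspose, Matrix.conjTranspose_eq_transpose_of_trivial] at this
    · have := hH.spectral_theorem
      rw [Unitary.conjStarAlgAut_apply, Matrix.star_eq_conjTranspose,
        Matrix.conjTranspose_eq_transpose_of_trivial] at this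
      exact this
  obtain ⟨C, hC⟩ : ∃ C, B = U * C * Uᵀ := by
    refine ⟨Uᵀ * B * U, ?_⟩
    calc B = (U * Uᵀ) * B * (U * Uᵀ) := by rw [hU']; simp
      _ = _ := by simp only [Matrix.mul_assoc]
  have hmul : ∀ X Y : Matrix (Fin m) (Fin m) ℝ,
      (U * X * Uᵀ) * (U * Y * Uᵀ) = U * (X * Y) * Uᵀ := fun X Y => by
    calc (U * X * Uᵀ) * (U * Y * Uᵀ) = U * X * (Uᵀ * U) * Y * Uᵀ := by
          simp only [Matrix.mul_assoc]
      _ = _ := by rw [hU]; simp only [Matrix.mul_one, Matrix.mul_assoc]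
  rw [hD, hC, hmul, hmul, ← Matrix.sub_mul, ← Matrix.mul_sub, frobSq_conj _ _ hU,
    frobSq_conj _ _ hU, frobSq_conj _ _ hU, trace_conj _ _ _ hU]
  exact diagonal_trace_sq_add_comm_le l C

lemma frobSq_of_symm {m : ℕ} {M : Matrix (Fin m) (Fin m) ℝ} (h : M.IsSymm) :
    frobSq M = (M * M).trace := by
  rw [frobSq_eq_trace, h.eq]

/-- `‖A_0‖² = |h̊|² + |H|²/m`. -/
lemma frobSq_zero_eq {m k : ℕ} (hm : 2 ≤ m) (hk : 0 < k)
    (A : Fin k → Matrix (Fin m) (Fin m) ℝ) (hsymm : ∀ α, (A α).IsSymm) (H : ℝ)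
    (htr₀ : (A ⟨0, hk⟩).trace = H) :
    frobSq (A ⟨0, hk⟩) = frobSq (tracelessh hk A H) + H ^ 2 / m := by
  have hm0 : (m : ℝ) ≠ 0 := by positivity
  have hs : (tracelessh hk A H).IsSymm := (hsymm _).sub (Matrix.isSymm_one.smul _)
  rw [frobSq_of_symm (hsymm _), frobSq_of_symm hs]
  simp only [tracelessh, Matrix.sub_mul, Matrix.mul_sub, Matrix.trace_sub, Matrix.smul_mul,
    Matrix.mul_smul, Matrix.one_mul, Matrix.mul_one, Matrix.trace_smul, htr₀, Matrix.trace_one,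
    Fintype.card_fin, smul_eq_mul]
  field_simp
  ring

/-- For `α ≥ 1`, the interaction of `A_0` with `A_α` is that of `h̊` with `A_α`. -/
lemma cross_le {m k : ℕ} (hk : 0 < k)
    (A : Fin k → Matrix (Fin m) (Fin m) ℝ) (hsymm : ∀ α, (A α).IsSymm) (H : ℝ)
    (B : Matrix (Fin m) (Fin m) ℝ) (hB : B.trace = 0) :
    (A ⟨0, hk⟩ * B).trace ^ 2 + frobSq (A ⟨0, hk⟩ * B - B * A ⟨0, hk⟩)
      ≤ 2 * frobSq (tracelessh hk A H) * frobSq B := by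
  have hs : (tracelessh hk A H).IsSymm := (hsymm _).sub (Matrix.isSymm_one.smul _)
  have h := trace_sq_add_comm_le _ B hs
  have h1 : (tracelessh hk A H * B).trace = (A ⟨0, hk⟩ * B).trace := by
    simp [tracelessh, Matrix.sub_mul, hB]
  have h2 : tracelessh hk A H * B - B * tracelessh hk A H
      = A ⟨0, hk⟩ * B - B * A ⟨0, hk⟩ := by
    simp [tracelessh, Matrix.sub_mul, Matrix.mul_sub]
  rwa [h1, h2] at h

/-- `R₁ ≤ ‖A_0‖⁴ + 4|h̊|²|A⁻|² + 2|A⁻|⁴`. -/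
lemma reactionR1_le {m k : ℕ} (hk : 0 < k)
    (A : Fin k → Matrix (Fin m) (Fin m) ℝ) (hsymm : ∀ α, (A α).IsSymm) (H : ℝ)
    (htr : ∀ α, α ≠ ⟨0, hk⟩ → (A α).trace = 0) :
    reactionR1 A ≤ frobSq (A ⟨0, hk⟩) ^ 2
      + 4 * frobSq (tracelessh hk A H) * AminusSq hk A + 2 * AminusSq hk A ^ 2 := by
  let z : Fin k := ⟨0, hk⟩
  let T : Fin k → Fin k → ℝ := fun α β =>
    (A α * A β).trace ^ 2 + frobSq (A α * A β - A β * A α)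
  have hT : reactionR1 A = ∑ α, ∑ β, T α β := by
    simp only [reactionR1, T, Finset.sum_add_distrib]
  have hsym : ∀ α β, T α β = T β α := fun α β => by
    have : frobSq (A α * A β - A β * A α) = frobSq (A β * A α - A α * A β) := by
      rw [← neg_sub]; simp [frobSq, -neg_sub]
    simp only [T, this, Matrix.trace_mul_comm (A α)]
  have hzz : T z z = frobSq (A z) ^ 2 := by
    simp only [T, sub_self, ← frobSq_of_symm (hsymm z)]
    simp [frobSq]
  have hz : ∑ β ∈ Finset.univ.erase z, T z β
      ≤ 2 * frobSq (tracelessh hk A H) * AminusSq hk A := by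
    rw [AminusSq, Finset.mul_sum]
    exact Finset.sum_le_sum fun β hβ =>
      cross_le hk A hsymm H _ (htr β (Finset.ne_of_mem_erase hβ))
  have hmm : ∑ α ∈ Finset.univ.erase z, ∑ β ∈ Finset.univ.erase z, T α β
      ≤ 2 * AminusSq hk A ^ 2 := by
    rw [AminusSq, sq, Finset.sum_mul_sum, Finset.mul_sum]
    refine Finset.sum_le_sum fun α _ => ?_
    rw [Finset.mul_sum]
    refine Finset.sum_le_sum fun β _ => ?_
    rw [← mul_assoc]
    exact trace_sq_add_comm_le _ _ (hsymm α)
  have hsplit : ∑ α, ∑ β, T α β = T z z + 2 * ∑ β ∈ Finset.univ.erase z, T z β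
      + ∑ α ∈ Finset.univ.erase z, ∑ β ∈ Finset.univ.erase z, T α β := by
    have hs : ∀ g : Fin k → ℝ, ∑ β, g β = g z + ∑ β ∈ Finset.univ.erase z, g β :=
      fun g => (Finset.add_sum_erase _ g (Finset.mem_univ z)).symm
    rw [hs]
    simp only [hs (T _), Finset.sum_add_distrib, hsym _ z]
    ring
  rw [hT, hsplit, hzz]
  linarith

/-- **Lower bound for the reaction terms of the pinching quantity `f` (flat-ambient
case).** With `f = c|H|² + d − |A|²`, `1/m < c ≤ 1/(m−k̃)`, `k̃ ≥ 1`, `m ≥ 4k̃`: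
`cR₂ − R₁ ≥ (2/(mc−1)) f |A⁻|² + (mc/(mc−1)) f |h̊|² + (1/(mc−1)) f²
− (1/(mc−1)) d (|A⁻|² + 2f) − (mc/(mc−1)) d |h̊|²`. -/
theorem pinching_reaction_lower_bound
    (m k : ℕ) (hm : 2 ≤ m) (hk : 0 < k)
    (A : Fin k → Matrix (Fin m) (Fin m) ℝ)
    (hsymm : ∀ α, (A α).IsSymm)
    (H : ℝ) (hH : 0 < H)
    (htr₀ : (A ⟨0, hk⟩).trace = H)
    (htr : ∀ α, α ≠ ⟨0, hk⟩ → (A α).trace = 0)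
    (ktilde : ℕ) (hkt : 1 ≤ ktilde) (hmkt : 4 * ktilde ≤ m)
    (c : ℝ) (hc₁ : 1 / (m : ℝ) < c) (hc₂ : c ≤ 1 / ((m : ℝ) - (ktilde : ℝ)))
    (d f : ℝ) (hf : f = c * H ^ 2 + d - ∑ α, frobSq (A α)) :
    c * (H ^ 2 * frobSq (A ⟨0, hk⟩)) - reactionR1 A
      ≥ (2 / ((m : ℝ) * c - 1)) * f * AminusSq hk A
        + ((m : ℝ) * c / ((m : ℝ) * c - 1)) * f * frobSq (tracelessh hk A H)
        + (1 / ((m : ℝ) * c - 1)) * f ^ 2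
        - (1 / ((m : ℝ) * c - 1)) * d * (AminusSq hk A + 2 * f)
        - ((m : ℝ) * c / ((m : ℝ) * c - 1)) * d * frobSq (tracelessh hk A H) := by
  have hmpos : (0 : ℝ) < m := by positivity
  have hktR : (1 : ℝ) ≤ ktilde := by exact_mod_cast hkt
  have hmkR : 4 * (ktilde : ℝ) ≤ m := by exact_mod_cast hmkt
  have h0 := frobSq_zero_eq hm hk A hsymm H htr₀
  have hR := reactionR1_le hk A hsymm H htr
  have hsum : ∑ α, frobSq (A α) = frobSq (A ⟨0, hk⟩) + AminusSq hk A :=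
    (Finset.add_sum_erase _ _ (Finset.mem_univ _)).symm
  have ha : 0 ≤ frobSq (tracelessh hk A H) := frobSq_nonneg _
  have hb : 0 ≤ AminusSq hk A := Finset.sum_nonneg fun _ _ => frobSq_nonneg _
  rw [hsum] at hf
  generalize frobSq (A ⟨0, hk⟩) = n at *
  generalize frobSq (tracelessh hk A H) = a at *
  generalize AminusSq hk A = b at *
  generalize reactionR1 A = R at *
  have he : 0 < (m : ℝ) * c - 1 := by
    rw [div_lt_iff₀ hmpos] at hc₁; linarith
  have he3 : 3 * ((m : ℝ) * c - 1) ≤ 1 := by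
    rw [le_div_iff₀ (by linarith)] at hc₂
    have hc0 : 0 < c := lt_trans (by positivity) hc₁
    nlinarith
  obtain ⟨e, hedef⟩ : ∃ e, e = (m : ℝ) * c - 1 := ⟨_, rfl⟩
  have hmc : (m : ℝ) * c = e + 1 := by linarith
  rw [← hedef] at he he3
  rw [← hedef, hmc]
  obtain ⟨h, hh⟩ : ∃ h, h = H ^ 2 / (m : ℝ) := ⟨_, rfl⟩
  have hH2 : c * H ^ 2 = (e + 1) * h := by
    rw [hh, ← hmc]; field_simp
  rw [← hh] at h0
  rw [hH2] at hf
  have hlhs : c * (H ^ 2 * n) = (e + 1) * h * n := by rw [← hH2]; ring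
  rw [hlhs]
  have hfe : f = e * h + d - a - b := by rw [hf, h0]; ring
  have key : 0 ≤ (1 - 3 * e) * (a * b) + (b ^ 2 - b * d + d ^ 2) - 2 * e * b ^ 2 := by
    have h1 : 0 ≤ (1 - 3 * e) * (a * b) :=
      mul_nonneg (by linarith) (mul_nonneg ha hb)
    have h2 : 0 ≤ (1 - 3 * e) * b ^ 2 := mul_nonneg (by linarith) (sq_nonneg b)
    nlinarith [sq_nonneg (b - 2 * d), sq_nonneg b]
  have hid : (e + 1) * h * n - (n ^ 2 + 4 * a * b + 2 * b ^ 2)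
      - (2 / e * f * b + (e + 1) / e * f * a + 1 / e * f ^ 2
        - 1 / e * d * (b + 2 * f) - (e + 1) / e * d * a)
      = ((1 - 3 * e) * (a * b) + (b ^ 2 - b * d + d ^ 2) - 2 * e * b ^ 2) / e := by
    rw [hfe, h0]
    field_simp
    ring
  have := div_nonneg key he.le
  rw [← hid] at this
  linarith
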